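/- arXiv:2312.03622 — 2 statements merged into one kernel-verified Lean document; each statement's English description precedes it below -/
import Mathlib

section
/- Let A ⊆ B be an inclusion of unital C*-algebras with A a closed *-subalgebra of B containing the unit 1_B. Then the following conditions are equivalent: (i) the inclusion A ⊆ B has real rank zero; (ii) for every self-adjoint a ∈ A and every ε > 0 there exists a self-adjoint b ∈ B whose spectrum is finite such that ‖a − b‖ ≤ ε; (iii) for every self-adjoint a ∈ A and every ε > 0 there exists an invertible self-adjoint b ∈ B such that ‖a − b‖ ≤ ε; (iv) for all positive x, y ∈ A with x·y = 0 and every ε > 0 there exists a projection p ∈ B such that ‖p·x − x‖ ≤ ε and ‖(1−p)·y − y‖ ≤ ε. -/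
open Filter Topology

section Defs

variable {B : Type*} [NonUnitalNormedRing B] [StarRing B] [PartialOrder B]

/-- A projection in a C*-algebra: a self-adjoint idempotent. -/
def IsProjection (p : B) : Prop := star p = p ∧ p * p = p

/-- The hereditary subalgebra `cl(a·S·a)`: the norm closure of `{a * b * a : b ∈ S}`. -/
def herSub (S : Set B) (a : B) : Set B := closure {x : B | ∃ b ∈ S, x = a * b * a}

/-- `T` has an approximate unit of projections: every positive `x ∈ T` is approximated
by `p * x` for projections `p ∈ T`. -/
def HasApproxUnitOfProjections (T : Set B) : Prop :=
  ∀ x ∈ T, 0 ≤ x → ∀ ε : ℝ, 0 < ε → ∃ p ∈ T, IsProjection p ∧ ‖p * x - x‖ < ε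

/-- The inclusion `A ⊆ S` of C*-algebras has real rank zero: for every nonzero positive
`a ∈ A`, the hereditary subalgebra `cl(a·S·a)` has an approximate unit of projections. -/
def InclusionRealRankZero (A S : Set B) : Prop :=
  ∀ a ∈ A, 0 ≤ a → a ≠ 0 → HasApproxUnitOfProjections (herSub S a)

end Defs

theorem isProjection_iff_isStarProjection {B : Type*} [NonUnitalNormedRing B] [StarRing B]
    {p : B} : IsProjection p ↔ IsStarProjection p :=
  ⟨fun h ↦ ⟨h.2, h.1⟩, fun h ↦ ⟨h.isSelfAdjoint, h.isIdempotentElem⟩⟩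

section Perturbation

variable {B : Type*} [CStarAlgebra B]

/-- If a projection `p` is almost fixed by a self-adjoint contraction `h`, then it is close to a
projection in `h * B * h`. -/
theorem exists_isStarProjection_conj_near {p h : B} (hp : IsStarProjection p)
    (hh : IsSelfAdjoint h) (hh1 : ‖h‖ ≤ 1) {r : ℝ} (hr : r ≤ 1 / 4) (hph : ‖p * h - p‖ ≤ r) :
    ∃ d : B, IsStarProjection (h * d * h) ∧ ‖h * d * h - p‖ ≤ 8 * r := by
  have hpp : p * p = p := hp.isIdempotentElem
  have hps : star p = p := hp.isSelfAdjoint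
  have hhs : star h = h := hh
  have hp1 : ‖p‖ ≤ 1 := IsStarProjection.norm_le p hp
  have hr0 : 0 ≤ r := (norm_nonneg _).trans hph
  have h1 : ‖(1 : B)‖ ≤ 1 := IsStarProjection.norm_le _ (.one B)
  have hhp : ‖h * p - p‖ ≤ r := by
    rw [← norm_star]; simpa [hps, hhs] using hph
  have hhp1 : ‖h * p‖ ≤ 1 := (norm_mul_le _ _).trans (mul_le_one₀ hh1 (norm_nonneg _) hp1)
  set m : B := p * h * (h * p) + (1 - p) with hm
  have hm1 : ‖1 - m‖ ≤ 2 * r := by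
    have e : 1 - m = -((p * h - p) * (h * p) + p * (h * p - p)) := by
      rw [hm, mul_sub p (h * p) p, hpp]; noncomm_ring
    rw [e, norm_neg]
    calc _ ≤ ‖p * h - p‖ * ‖h * p‖ + ‖p‖ * ‖h * p - p‖ :=
          (norm_add_le _ _).trans (add_le_add (norm_mul_le _ _) (norm_mul_le _ _))
      _ ≤ r * 1 + 1 * r := by gcongr
      _ = 2 * r := by ring
  have hmu : IsUnit m := by
    simpa using isUnit_one_sub_of_norm_lt_one (x := 1 - m) (by linarith)
  have hms : star m = m := by simp [hm, hps, hhs]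
  have hmp : m * p = p * h * (h * p) := by
    rw [hm]; simp [add_mul, sub_mul, mul_assoc, hpp]
  have hpm : p * m = p * h * (h * p) := by
    rw [hm]; simp only [mul_add, mul_sub, ← mul_assoc, hpp]; simp
  obtain ⟨w, hmw, hwm⟩ := isUnit_iff_exists.mp hmu
  have hws : star w = w := by
    have : star w * m = 1 := by rw [← hms, ← star_mul, hmw, star_one]
    calc star w = star w * (m * w) := by rw [hmw, mul_one]
      _ = w := by rw [← mul_assoc, this, one_mul]
  have hw1 : ‖w - 1‖ ≤ ‖w‖ * (2 * r) := by
    have e : w - 1 = w * (1 - m) := by rw [mul_sub, hwm, mul_one]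
    rw [e]
    exact (norm_mul_le _ _).trans (by gcongr)
  have hw2 : ‖w‖ ≤ 2 := by
    have := norm_sub_norm_le w 1
    nlinarith [norm_nonneg w]
  have hpwp : ‖p * w‖ ≤ 2 := (norm_mul_le _ _).trans (by nlinarith [norm_nonneg w, norm_nonneg p])
  refine ⟨p * w * p, ⟨?_, ?_⟩, ?_⟩
  · calc h * (p * w * p) * h * (h * (p * w * p) * h)
        = h * p * w * (p * h * (h * p)) * w * p * h := by noncomm_ring
      _ = h * p * (w * m) * p * w * p * h := by rw [← hmp]; noncomm_ring
      _ = h * (p * p) * w * p * h := by rw [hwm]; noncomm_ring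
      _ = h * (p * w * p) * h := by rw [hpp]; noncomm_ring
  · simp [isSelfAdjoint_iff, hps, hhs, hws, mul_assoc]
  · have e : h * (p * w * p) * h - p
        = (h * p - p) * w * (p * h) + p * w * (p * h - p) + p * (w - 1) * p := by
      have : p * (w - 1) * p = p * w * p - p := by simp [mul_sub, sub_mul, hpp]
      have e2 : p * w * (p * h - p) = p * w * (p * h) - p * w * p := by rw [mul_sub]
      rw [this, e2]; noncomm_ring
    have hph1 : ‖p * h‖ ≤ 1 := (norm_mul_le _ _).trans (mul_le_one₀ hp1 (norm_nonneg _) hh1)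
    rw [e]
    calc _ ≤ ‖h * p - p‖ * ‖w‖ * ‖p * h‖ + ‖p * w‖ * ‖p * h - p‖ + ‖p‖ * ‖w - 1‖ * ‖p‖ := by
          refine norm_add₃_le.trans (add_le_add_three ?_ (norm_mul_le _ _) ?_)
          · exact norm_mul₃_le
          · exact norm_mul₃_le
      _ ≤ r * 2 * 1 + 2 * r + 1 * (2 * (2 * r)) * 1 := by
          gcongr
          exact hw1.trans (by gcongr)
      _ = 8 * r := by ring

/-- A projection that is almost dominated by a projection `P` is close to a projection dominated
by `P`. -/
theorem exists_isStarProjection_le_near {p P : B} (hp : IsStarProjection p)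
    (hP : IsStarProjection P) {r : ℝ} (hr : r ≤ 1 / 4) (h : ‖p * P - p‖ ≤ r) :
    ∃ q : B, IsStarProjection q ∧ P * q = q ∧ ‖q - p‖ ≤ 8 * r := by
  obtain ⟨d, hd, hdp⟩ := exists_isStarProjection_conj_near hp hP.isSelfAdjoint
    (IsStarProjection.norm_le P hP) hr h
  exact ⟨P * d * P, hd, by simp only [← mul_assoc, hP.isIdempotentElem.eq], hdp⟩

theorem spectrum_add_subset {S p : B} (hp : IsStarProjection p) {n : ℂ}
    (hSp : S * p = n • p) : spectrum ℂ (S + p) ⊆ insert n (insert (n + 1) (spectrum ℂ S)) := by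
  intro z hz
  by_contra hcon
  simp only [Set.mem_insert_iff, not_or] at hcon
  obtain ⟨h1, h2, h3⟩ := hcon
  refine spectrum.notMem_iff.mpr ?_ hz
  have hpp : p * p = p := hp.isIdempotentElem
  have hzn : z - n ≠ 0 := sub_ne_zero.mpr h1
  have hzn1 : z - n - 1 ≠ 0 := by
    rw [sub_sub]; exact sub_ne_zero.mpr h2
  have e : algebraMap ℂ B z - (S + p) = (algebraMap ℂ B z - S) * (1 - (z - n)⁻¹ • p) := by
    rw [mul_sub, mul_smul_comm, sub_mul (algebraMap ℂ B z) S p, hSp, ← Algebra.smul_def, ← sub_smul, smul_smul,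
      inv_mul_cancel₀ hzn]
    simp; abel
  rw [e]
  refine (spectrum.notMem_iff.mp h3).mul (isUnit_iff_exists.mpr ⟨1 + (z - n - 1)⁻¹ • p, ?_, ?_⟩)
  all_goals
    simp only [mul_add, sub_mul, add_mul, mul_sub, mul_smul_comm, smul_mul_assoc, hpp, one_mul,
      mul_one]
    match_scalars <;> grind

theorem spectrum_finite_zero : (spectrum ℂ (0 : B)).Finite := by
  rcases subsingleton_or_nontrivial B with h | h
  · simp [spectrum.of_subsingleton]
  · simp [spectrum.zero_eq]

end Perturbation

section Order

variable {B : Type*} [CStarAlgebra B] [PartialOrder B] [StarOrderedRing B]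

theorem le_isStarProjection_add {p c : B} (hp : IsStarProjection p) (hc : IsSelfAdjoint c)
    (hc1 : c ≤ 1) {r : ℝ} (h : ‖p * c - c‖ ≤ r) : c ≤ p + algebraMap ℝ B (2 * r) := by
  have hpp : p * p = p := hp.isIdempotentElem
  have hps : star p = p := hp.isSelfAdjoint
  have hcs : star c = c := hc
  have hp1 : ‖p‖ ≤ 1 := IsStarProjection.norm_le p hp
  have hr0 : 0 ≤ r := (norm_nonneg _).trans h
  have h' : ‖c * p - c‖ ≤ r := by
    rw [← norm_star]; simpa [hps, hcs] using h
  have hsa : IsSelfAdjoint (c - p * c * p) := by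
    simp [isSelfAdjoint_iff, hps, hcs, mul_assoc]
  have hn : ‖c - p * c * p‖ ≤ 2 * r := by
    have e : c - p * c * p = -((p * c - c) + p * (c * p - c)) := by noncomm_ring
    rw [e, norm_neg]
    calc _ ≤ ‖p * c - c‖ + ‖p‖ * ‖c * p - c‖ :=
          (norm_add_le _ _).trans (add_le_add le_rfl (norm_mul_le _ _))
      _ ≤ r + 1 * r := by gcongr
      _ = 2 * r := by ring
  have h1 : c - p * c * p ≤ algebraMap ℝ B (2 * r) :=
    hsa.le_algebraMap_norm_self.trans (algebraMap_mono B hn)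
  have h2 : p * c * p ≤ p := by
    simpa [hpp] using hp.isSelfAdjoint.conjugate_le_conjugate hc1
  calc c = p * c * p + (c - p * c * p) := by abel
    _ ≤ p + algebraMap ℝ B (2 * r) := add_le_add h2 h1

theorem isStarProjection_le_add {p c : B} (hp : IsStarProjection p) (hc : 0 ≤ c)
    {r : ℝ} (h : ‖p * c - p‖ ≤ r) : p ≤ c + algebraMap ℝ B (2 * r) := by
  have := le_isStarProjection_add hp.one_sub (c := 1 - c) (r := r)
    ((IsSelfAdjoint.one B).sub hc.isSelfAdjoint) (by simpa using hc) (by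
      convert h using 2; noncomm_ring)
  have h2 := add_le_add this (le_refl (c + p - 1))
  calc p = 1 - c + (c + p - 1) := by abel
    _ ≤ _ := h2
    _ = _ := by abel

theorem norm_sub_le_of_le_add {x y : B} {s r : ℝ} (hs : 0 ≤ s) (hr : 0 ≤ r) (h1 : y ≤ x + algebraMap ℝ B s) (h2 : x ≤ y + algebraMap ℝ B r) :
    ‖x - y‖ ≤ r + 2 * s := by
  have h0 : 0 ≤ x - y + algebraMap ℝ B s := by
    have := sub_nonneg.mpr h1
    convert this using 1; abel
  have h3 : x - y + algebraMap ℝ B s ≤ algebraMap ℝ B (r + s) := by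
    rw [map_add]; gcongr; exact sub_le_iff_le_add'.mpr h2
  have h4 := (CStarAlgebra.norm_le_iff_le_algebraMap _ (by positivity) h0).mpr h3
  have h5 : ‖algebraMap ℝ B s‖ ≤ s := by
    rw [Algebra.algebraMap_eq_smul_one, norm_smul, Real.norm_of_nonneg hs]
    exact mul_le_of_le_one_right hs (IsStarProjection.norm_le _ (.one B))
  calc ‖x - y‖ = ‖(x - y + algebraMap ℝ B s) - algebraMap ℝ B s‖ := by rw [add_sub_cancel_right]
    _ ≤ (r + s) + s := (norm_sub_le _ _).trans (add_le_add h4 h5)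
    _ = r + 2 * s := by ring

end Order

section Chain

variable {B : Type*} [CStarAlgebra B] [PartialOrder B] [StarOrderedRing B]

/-- In a layer-cake decomposition `∑ c k`, if consecutive layers can be almost separated by
projections, then these can be chosen decreasing, and their sum is close to that of the layers. -/
theorem exists_spectrum_finite_layers {c : ℕ → B} (hc0 : ∀ n, 0 ≤ c n) (hc1 : ∀ n, c n ≤ 1)
    (hc : ∀ n, ∀ r : ℝ, 0 < r → ∃ p : B, IsStarProjection p ∧
      ‖p * c (n + 1) - c (n + 1)‖ ≤ r ∧ ‖p * c n - p‖ ≤ r) (n : ℕ) :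
    ∀ η : ℝ, 0 < η → ∃ P S : B, IsStarProjection P ∧ IsSelfAdjoint S ∧ S * P = (n : ℂ) • P ∧
      (spectrum ℂ S).Finite ∧ ‖P * c n - c n‖ ≤ η ∧
      S ≤ ∑ k ∈ Finset.range n, c k + algebraMap ℝ B η ∧
      ∑ k ∈ Finset.range n, c k + P ≤ S + 1 + algebraMap ℝ B η := by
  induction n with
  | zero =>
    intro η hη
    have h0 : (0 : B) ≤ algebraMap ℝ B η := algebraMap_nonneg B hη.le
    exact ⟨1, 0, .one B, .zero B, by simp, spectrum_finite_zero, by simpa using hη.le,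
      by simpa using h0, by simpa using h0⟩
  | succ n ih =>
    intro η hη
    set r : ℝ := min (η / 100) (1 / 12) with hr
    have hr0 : 0 < r := by positivity
    have hr1 : r ≤ η / 100 := min_le_left _ _
    have hr2 : r ≤ 1 / 12 := min_le_right _ _
    obtain ⟨P, S, hP, hS, hSP, hfin, hPc, hle, hge⟩ := ih r hr0
    obtain ⟨p, hp, hpc', hpc⟩ := hc n r hr0
    have hP1 : ‖P‖ ≤ 1 := IsStarProjection.norm_le P hP
    have hp1 : ‖p‖ ≤ 1 := IsStarProjection.norm_le p hp
    have hcn (k : ℕ) : ‖c k‖ ≤ 1 := (CStarAlgebra.norm_le_one_iff_of_nonneg _ (hc0 k)).mpr (hc1 k)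
    have hcP : ‖c n * P - c n‖ ≤ r := by
      rw [← norm_star]
      simpa [hP.isSelfAdjoint.star_eq, (hc0 n).isSelfAdjoint.star_eq] using hPc
    have hpP : ‖p * P - p‖ ≤ 3 * r := by
      have e : p * P - p = p * (c n * P - c n) - (p * c n - p) * P + (p * c n - p) := by
        noncomm_ring
      rw [e]
      calc _ ≤ ‖p‖ * ‖c n * P - c n‖ + ‖p * c n - p‖ * ‖P‖ + ‖p * c n - p‖ :=
            (norm_add_le _ _).trans (add_le_add ((norm_sub_le _ _).trans
              (add_le_add (norm_mul_le _ _) (norm_mul_le _ _))) le_rfl)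
        _ ≤ 1 * r + r * 1 + r := by gcongr
        _ = 3 * r := by ring
    obtain ⟨q, hq, hPq, hqp⟩ := exists_isStarProjection_le_near hp hP (r := 3 * r)
      (by linarith) hpP
    have hqc' : ‖q * c (n + 1) - c (n + 1)‖ ≤ 25 * r := by
      have e : q * c (n + 1) - c (n + 1) =
          (q - p) * c (n + 1) + (p * c (n + 1) - c (n + 1)) := by noncomm_ring
      rw [e]
      calc _ ≤ ‖q - p‖ * ‖c (n + 1)‖ + ‖p * c (n + 1) - c (n + 1)‖ :=
            (norm_add_le _ _).trans (add_le_add (norm_mul_le _ _) le_rfl)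
        _ ≤ 8 * (3 * r) * 1 + r := by gcongr; exact hcn _
        _ = 25 * r := by ring
    have hqc : ‖q * c n - q‖ ≤ 49 * r := by
      have e : q * c n - q = (q - p) * c n + (p * c n - p) - (q - p) := by noncomm_ring
      rw [e]
      calc _ ≤ ‖q - p‖ * ‖c n‖ + ‖p * c n - p‖ + ‖q - p‖ :=
            (norm_sub_le _ _).trans (add_le_add ((norm_add_le _ _).trans
              (add_le_add (norm_mul_le _ _) le_rfl)) le_rfl)
        _ ≤ 8 * (3 * r) * 1 + r + 8 * (3 * r) := by gcongr; exact hcn _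
        _ = 49 * r := by ring
    have hSq : S * q = (n : ℂ) • q := by
      rw [← hPq, ← mul_assoc, hSP, smul_mul_assoc]
    refine ⟨q, S + q, hq, hS.add hq.isSelfAdjoint, ?_, ?_, hqc'.trans (by linarith), ?_, ?_⟩
    · rw [add_mul, hSq, hq.isIdempotentElem.eq, Nat.cast_succ, add_smul, one_smul]
    · exact ((hfin.insert _).insert _).subset (spectrum_add_subset hq hSq)
    · rw [Finset.sum_range_succ]
      calc S + q ≤ (∑ k ∈ Finset.range n, c k + algebraMap ℝ B r)
            + (c n + algebraMap ℝ B (2 * (49 * r))) :=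
            add_le_add hle (isStarProjection_le_add hq (hc0 n) hqc)
        _ = ∑ k ∈ Finset.range n, c k + c n + algebraMap ℝ B (r + 2 * (49 * r)) := by
            rw [map_add]; abel
        _ ≤ _ := by gcongr; linarith
    · rw [Finset.sum_range_succ]
      calc ∑ k ∈ Finset.range n, c k + c n + q
          = (∑ k ∈ Finset.range n, c k + P) + c n + (q - P) := by abel
        _ ≤ (S + 1 + algebraMap ℝ B r) + (P + algebraMap ℝ B (2 * r)) + (q - P) := by
            gcongr
            exact le_isStarProjection_add hP (hc0 n).isSelfAdjoint (hc1 n) hPc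
        _ = S + q + 1 + algebraMap ℝ B (r + 2 * r) := by rw [map_add]; abel
        _ ≤ _ := by gcongr; linarith

end Chain

section Cutoff

variable {B : Type*} [CStarAlgebra B] [PartialOrder B] [StarOrderedRing B]

theorem exists_cutoff {A : StarSubalgebra ℂ B} (hA : IsClosed (A : Set B)) {a : B} (ha : a ∈ A)
    (ha0 : 0 ≤ a) {δ : ℝ} (hδ : 0 < δ) :
    ∃ x ∈ A, ∃ k ∈ A, 0 ≤ x ∧ IsSelfAdjoint k ∧ k * a = a * k ∧ 0 ≤ a * k ∧ a * k ≤ 1 ∧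
      x * (1 - a * k) = 0 ∧ ‖a - x‖ ≤ δ ∧ ‖a * k * a - a‖ ≤ δ := by
  have : IsClosed (A : Set B) := hA
  have hspec : ∀ t ∈ spectrum ℝ a, 0 ≤ t := fun t ht ↦ spectrum_nonneg_of_nonneg ha0 ht
  have hmax (t : ℝ) : 0 < max t δ := lt_max_of_lt_right hδ
  obtain ⟨g, hg, hgt⟩ : ∃ g : ℝ → ℝ, Continuous g ∧ ∀ t, g t = (max t δ)⁻¹ :=
    ⟨fun t ↦ (max t δ)⁻¹, (continuous_id.max continuous_const).inv₀ fun t ↦ (hmax t).ne',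
      fun _ ↦ rfl⟩
  set k := cfc g a with hk
  set x := cfc (fun t : ℝ ↦ max (t - δ) 0) a with hx
  have hid : cfc (fun t : ℝ ↦ t) a = a := cfc_id' ℝ a
  have hak : a * k = cfc (fun t : ℝ ↦ t * g t) a := by
    rw [cfc_mul (fun t ↦ t) g a, hid]
  have hka : k * a = a * k := by
    conv_lhs => rw [← hid]
    conv_rhs => rw [← hid]
    exact (cfc_commute_cfc _ _ a).eq
  have hle1 (t : ℝ) : t * g t ≤ 1 := by
    rw [hgt, ← div_eq_mul_inv, div_le_one (hmax t)]; exact le_max_left _ _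
  refine ⟨x, cfc_mem (𝕜' := ℂ) _ ha, k, cfc_mem (𝕜' := ℂ) _ ha,
    cfc_nonneg fun t _ ↦ le_max_right _ _, cfc_predicate _ _, hka, ?_, ?_, ?_, ?_, ?_⟩
  · rw [hak]
    exact cfc_nonneg fun t ht ↦ mul_nonneg (hspec t ht) (hgt t ▸ inv_nonneg.mpr (hmax t).le)
  · rw [hak]
    exact cfc_le_one _ _ fun t _ ↦ hle1 t
  · rw [hak, ← cfc_const_one ℝ a, ← cfc_sub .., ← cfc_mul .., ← cfc_const_zero ℝ a]
    refine cfc_congr fun t _ ↦ ?_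
    rcases le_total t δ with h | h
    · simp [max_eq_right (sub_nonpos.mpr h)]
    · simp [hgt, max_eq_left h, mul_inv_cancel₀ (hδ.trans_le h).ne']
  · have e : a - x = cfc (fun t : ℝ ↦ t - max (t - δ) 0) a := by
      rw [cfc_sub .., hid]
    rw [e]
    refine norm_cfc_le hδ.le fun t ht ↦ ?_
    have := hspec t ht
    rcases le_total t δ with h | h
    · simp [abs_of_nonneg this, h]
    · simp [max_eq_left (sub_nonneg.mpr h), abs_of_pos hδ]
  · have e : a * k * a - a = cfc (fun t : ℝ ↦ t * g t * t - t) a := by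
      rw [cfc_sub .., cfc_mul .., hid, ← hak]
    rw [e]
    refine norm_cfc_le hδ.le fun t ht ↦ ?_
    have := hspec t ht
    rcases le_total t δ with h | h
    · rw [hgt, max_eq_right h, Real.norm_eq_abs, abs_le]
      have h1 : t * δ⁻¹ ≤ 1 := by rw [← div_eq_mul_inv, div_le_one hδ]; exact h
      have h2 : 0 ≤ t * δ⁻¹ := by positivity
      constructor <;> nlinarith
    · simp [hgt, max_eq_left h, mul_inv_cancel₀ (hδ.trans_le h).ne', hδ.le]

theorem exists_layers {A : StarSubalgebra ℂ B} (hA : IsClosed (A : Set B)) {d : B} (hd : d ∈ A)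
    (hd0 : 0 ≤ d) {N : ℕ} (hN : ‖d‖ ≤ N) :
    ∃ c : ℕ → B, (∀ n, c n ∈ A) ∧ (∀ n, 0 ≤ c n) ∧ (∀ n, c n ≤ 1) ∧
      (∀ n, c (n + 1) * (1 - c n) = 0) ∧ ∑ k ∈ Finset.range N, c k = d := by
  have : IsClosed (A : Set B) := hA
  have hspec : ∀ t ∈ spectrum ℝ d, 0 ≤ t := fun t ht ↦ spectrum_nonneg_of_nonneg hd0 ht
  set F : ℕ → B := fun n ↦ cfc (fun t : ℝ ↦ min t n) d with hF
  have hc (n : ℕ) : F (n + 1) - F n = cfc (fun t : ℝ ↦ min t (n + 1) - min t n) d := by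
    simp only [hF]
    rw [cfc_sub ..]; push_cast; rfl
  refine ⟨fun n ↦ F (n + 1) - F n,
    fun n ↦ sub_mem (cfc_mem (𝕜' := ℂ) _ hd) (cfc_mem (𝕜' := ℂ) _ hd), fun n ↦ ?_, fun n ↦ ?_, fun n ↦ ?_, ?_⟩
  · beta_reduce
    rw [hc]
    exact cfc_nonneg fun t _ ↦ by grind
  · beta_reduce
    rw [hc]
    exact cfc_le_one _ _ fun t _ ↦ by grind
  · beta_reduce
    rw [hc, hc, ← cfc_const_one ℝ d, ← cfc_sub .., ← cfc_mul .., ← cfc_const_zero ℝ d]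
    refine cfc_congr fun t _ ↦ ?_
    push_cast
    rcases le_total t (n + 1) with h | h
    · have : min t ((n : ℝ) + 1 + 1) - min t ((n : ℝ) + 1) = 0 := by grind
      simp only [this, zero_mul]
    · have : 1 - (min t ((n : ℝ) + 1) - min t n) = 0 := by grind
      simp only [this, mul_zero]
  · rw [Finset.sum_range_sub]
    have h1 : F N = d := by
      conv_rhs => rw [← cfc_id' ℝ d]
      refine cfc_congr fun t ht ↦ ?_
      rcases subsingleton_or_nontrivial B with h | h
      · simp [spectrum.of_subsingleton] at ht
      · exact min_eq_left ((Real.le_norm_self t).trans ((spectrum.norm_le_norm_of_mem ht).trans hN))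
    have h2 : F 0 = 0 := by
      rw [← cfc_const_zero ℝ d]
      refine cfc_congr fun t ht ↦ ?_
      simpa using hspec t ht
    rw [h1, h2, sub_zero]

end Cutoff

section SpectralProjection

variable {B : Type*} [CStarAlgebra B]

theorem mul_eq_zero_of_mem_herSub {S : Set B} {x y p : B} (hxy : x * y = 0)
    (hp : p ∈ herSub S x) : p * y = 0 := by
  have hcl : IsClosed {z : B | z * y = 0} :=
    isClosed_eq (continuous_id.mul continuous_const) continuous_const
  refine closure_minimal ?_ hcl hp
  rintro _ ⟨b, -, rfl⟩
  simp [mul_assoc, hxy]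

theorem exists_norm_posPart_sub_le (a : B) (ha : IsSelfAdjoint a) {ε : ℝ} (hε : 0 < ε) :
    ∃ δ > 0, ∀ b : B, IsSelfAdjoint b → ‖a - b‖ ≤ δ → ‖a⁺ - b⁺‖ ≤ ε := by
  have hc : ContinuousOn (fun b : B ↦ cfcₙ (fun t : ℝ ↦ t⁺) b) {b | IsSelfAdjoint b} :=
    ContinuousOn.cfcₙ_of_mem_nhdsSet (s := Set.univ) _ Filter.univ_mem continuousOn_id
      (fun _ h ↦ h) (by simp only [posPart_def]; fun_prop) (by simp)
  obtain ⟨δ, hδ, h⟩ := Metric.continuousOn_iff.mp hc a ha ε hε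
  refine ⟨δ / 2, by positivity, fun b hb hab ↦ ?_⟩
  have := h b hb (by rw [dist_comm, dist_eq_norm]; linarith)
  rw [dist_comm, dist_eq_norm] at this
  simpa only [CFC.posPart_def] using this.le

theorem exists_isStarProjection_mul_posPart {b : B} (hu : IsUnit b) :
    ∃ p : B, IsStarProjection p ∧ p * b⁺ = b⁺ ∧ p * b⁻ = 0 := by
  have h0 : ∀ t ∈ spectrum ℝ b, t ≠ 0 := by
    rintro t ht rfl
    exact spectrum.zero_notMem ℝ hu ht
  obtain ⟨χ, hχ, hχ1, hχ0⟩ : ∃ χ : ℝ → ℝ, ContinuousOn χ (spectrum ℝ b) ∧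
      (∀ t, 0 < t → χ t = 1) ∧ ∀ t, t < 0 → χ t = 0 := by
    refine ⟨fun t ↦ max (t / |t|) 0, ?_, fun t ht ↦ ?_, fun t ht ↦ ?_⟩
    · exact (continuousOn_id.div continuous_abs.continuousOn
        fun t ht ↦ abs_ne_zero.mpr (h0 t ht)).sup continuousOn_const
    · simp [abs_of_pos ht, ht.ne']
    · simp [abs_of_neg ht, ht.ne]
  have hpos : b⁺ = cfc (fun t : ℝ ↦ max t 0) b := by
    rw [CFC.posPart_def, cfcₙ_eq_cfc ..]; rfl
  have hneg : b⁻ = cfc (fun t : ℝ ↦ max (-t) 0) b := by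
    rw [CFC.negPart_def, cfcₙ_eq_cfc ..]; rfl
  refine ⟨cfc χ b, ⟨?_, cfc_predicate _ _⟩, ?_, ?_⟩
  · rw [IsIdempotentElem, ← cfc_mul ..]
    refine cfc_congr fun t ht ↦ ?_
    rcases (h0 t ht).lt_or_gt with h | h
    · simp [hχ0 t h]
    · simp [hχ1 t h]
  · rw [hpos, ← cfc_mul ..]
    refine cfc_congr fun t ht ↦ ?_
    rcases (h0 t ht).lt_or_gt with h | h
    · simp [hχ0 t h, h.le]
    · simp [hχ1 t h]
  · rw [hneg, ← cfc_mul .., ← cfc_const_zero ℝ b]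
    refine cfc_congr fun t ht ↦ ?_
    rcases (h0 t ht).lt_or_gt with h | h
    · simp [hχ0 t h]
    · simp [h.le]

theorem invertible_approximation_of_spectrum_finite {b : B} (hb : IsSelfAdjoint b)
    (hfin : (spectrum ℂ b).Finite) {ε : ℝ} (hε : 0 < ε) :
    ∃ c : B, IsSelfAdjoint c ∧ IsUnit c ∧ ‖b - c‖ ≤ ε := by
  have hinj : Function.Injective fun t : ℝ ↦ (t : ℂ) := Complex.ofReal_injective
  obtain ⟨t, ht, htb⟩ := ((Set.Ioo_infinite hε).sdiff
    (hfin.preimage hinj.injOn)).nonempty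
  have hu : IsUnit (algebraMap ℂ B t - b) := spectrum.notMem_iff.mp htb
  have e : algebraMap ℂ B t = algebraMap ℝ B t := by
    rw [IsScalarTower.algebraMap_apply ℝ ℂ B]; rfl
  rw [e] at hu
  refine ⟨b - algebraMap ℝ B t, hb.sub (cfc_predicate_algebraMap t), ?_, ?_⟩
  · simpa using hu.neg
  · rw [sub_sub_cancel, Algebra.algebraMap_eq_smul_one, norm_smul, Real.norm_of_nonneg ht.1.le]
    exact (mul_le_of_le_one_right ht.1.le (IsStarProjection.norm_le _ (.one B))).trans ht.2.le

end SpectralProjection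

section Equivalences

variable {B : Type*} [CStarAlgebra B] [PartialOrder B] [StarOrderedRing B]

theorem separation_of_inclusionRealRankZero {A : StarSubalgebra ℂ B}
    (hA : IsClosed (A : Set B)) (h : InclusionRealRankZero (A : Set B) Set.univ) {x y : B}
    (hx : x ∈ A) (hx0 : 0 ≤ x) (hxy : x * y = 0) {ε : ℝ} (hε : 0 < ε) :
    ∃ p : B, IsProjection p ∧ ‖p * x - x‖ ≤ ε ∧ ‖(1 - p) * y - y‖ ≤ ε := by
  rcases eq_or_ne x 0 with rfl | hne
  · exact ⟨0, by simp [IsProjection], by simpa using hε.le, by simpa using hε.le⟩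
  have hmem : x ∈ herSub Set.univ x := by
    refine Metric.mem_closure_iff.mpr fun δ hδ ↦ ?_
    obtain ⟨-, -, k, -, -, -, hka, -, -, -, -, h1⟩ := exists_cutoff hA hx hx0 (half_pos hδ)
    refine ⟨x * k * x, ⟨k, trivial, rfl⟩, ?_⟩
    rw [dist_comm, dist_eq_norm]
    linarith
  obtain ⟨p, hp, hproj, hpx⟩ := h x hx hx0 hne x hmem hx0 ε hε
  refine ⟨p, hproj, hpx.le, ?_⟩
  simpa [sub_mul, mul_eq_zero_of_mem_herSub hxy hp] using hε.le

theorem inclusionRealRankZero_of_separation {A : StarSubalgebra ℂ B}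
    (hA : IsClosed (A : Set B))
    (h : ∀ x ∈ A, ∀ y ∈ A, 0 ≤ x → 0 ≤ y → x * y = 0 → ∀ ε : ℝ, 0 < ε →
      ∃ p : B, IsProjection p ∧ ‖p * x - x‖ ≤ ε ∧ ‖(1 - p) * y - y‖ ≤ ε) :
    InclusionRealRankZero (A : Set B) Set.univ := by
  intro a ha ha0 _
  have key : ∀ ε : ℝ, 0 < ε →
      ∃ q ∈ herSub Set.univ a, IsStarProjection q ∧ ‖q * a - a‖ ≤ ε := by
    intro ε hε
    obtain ⟨x, hx, k, hk, hx0, hks, hka, hh0, hh1, hxk, hax, -⟩ :=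
      exists_cutoff hA ha ha0 (by positivity : 0 < ε / 4)
    set r : ℝ := min (1 / 4) (ε / (4 * (8 * (‖a‖ + 1)))) with hr
    have hr0 : 0 < r := by positivity
    have hrε : 8 * r * ‖a‖ ≤ ε / 4 := by
      have h1 : r ≤ ε / (4 * (8 * (‖a‖ + 1))) := min_le_right _ _
      have h2 : 0 < ‖a‖ + 1 := by positivity
      rw [le_div_iff₀ (by positivity)] at h1
      nlinarith [norm_nonneg a]
    obtain ⟨p, hp, hpx, hpy⟩ := h x hx (1 - a * k) (sub_mem (one_mem _) (mul_mem ha hk)) hx0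
      (sub_nonneg.mpr hh1) hxk (min r (ε / 4)) (by positivity)
    rw [isProjection_iff_isStarProjection] at hp
    obtain ⟨d, hq, hqp⟩ := exists_isStarProjection_conj_near hp hh0.isSelfAdjoint
      ((CStarAlgebra.norm_le_one_iff_of_nonneg _ hh0).mpr hh1) (min_le_left _ _ : r ≤ 1 / 4) (by
        refine le_trans (le_of_eq ?_) (hpy.trans (min_le_left _ _))
        congr 1; noncomm_ring)
    set q := a * k * d * (a * k) with hqd
    have hpx' : ‖p * x - x‖ ≤ ε / 4 := hpx.trans (min_le_right _ _)
    have hp1 : ‖p‖ ≤ 1 := IsStarProjection.norm_le p hp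
    refine ⟨q, subset_closure ⟨k * d * k, trivial, ?_⟩, hq, ?_⟩
    · calc q = a * k * d * (k * a) := by rw [hqd, hka]
        _ = a * (k * d * k) * a := by noncomm_ring
    · have e : q * a - a = (q - p) * a + p * (a - x) + (p * x - x) - (a - x) := by noncomm_ring
      rw [e]
      calc _ ≤ ‖q - p‖ * ‖a‖ + ‖p‖ * ‖a - x‖ + ‖p * x - x‖ + ‖a - x‖ :=
            (norm_sub_le _ _).trans (add_le_add (norm_add₃_le.trans
              (add_le_add_three (norm_mul_le _ _) (norm_mul_le _ _) le_rfl)) le_rfl)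
        _ ≤ 8 * r * ‖a‖ + 1 * (ε / 4) + ε / 4 + ε / 4 := by gcongr
        _ ≤ ε := by linarith
  intro x hx _ ε hε
  obtain ⟨_, ⟨b, -, rfl⟩, hb⟩ := Metric.mem_closure_iff.mp hx (ε / 4) (by positivity)
  rw [dist_eq_norm] at hb
  obtain ⟨q, hqm, hq, hqa⟩ := key (ε / (4 * (‖b * a‖ + 1))) (by positivity)
  refine ⟨q, hqm, isProjection_iff_isStarProjection.mpr hq, ?_⟩
  have hq1 : ‖q‖ ≤ 1 := IsStarProjection.norm_le q hq
  have e : q * x - x = q * (x - a * b * a) + (q * a - a) * (b * a) - (x - a * b * a) := by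
    noncomm_ring
  have h1 : ‖q * a - a‖ * ‖b * a‖ ≤ ε / 4 := by
    rw [le_div_iff₀ (by positivity)] at hqa
    nlinarith [norm_nonneg (q * a - a)]
  rw [e]
  calc _ ≤ ‖q‖ * ‖x - a * b * a‖ + ‖q * a - a‖ * ‖b * a‖ + ‖x - a * b * a‖ :=
        (norm_sub_le _ _).trans (add_le_add ((norm_add_le _ _).trans
          (add_le_add (norm_mul_le _ _) (norm_mul_le _ _))) le_rfl)
    _ ≤ 1 * (ε / 4) + ε / 4 + ε / 4 := by gcongr
    _ < ε := by linarith

theorem separation_of_invertible_approximation {A : StarSubalgebra ℂ B}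
    (h : ∀ a ∈ A, IsSelfAdjoint a → ∀ ε : ℝ, 0 < ε →
      ∃ b : B, IsSelfAdjoint b ∧ IsUnit b ∧ ‖a - b‖ ≤ ε) {x y : B} (hx : x ∈ A) (hy : y ∈ A)
    (hx0 : 0 ≤ x) (hy0 : 0 ≤ y) (hxy : x * y = 0) {ε : ℝ} (hε : 0 < ε) :
    ∃ p : B, IsProjection p ∧ ‖p * x - x‖ ≤ ε ∧ ‖(1 - p) * y - y‖ ≤ ε := by
  have ha : IsSelfAdjoint (x - y) := hx0.isSelfAdjoint.sub hy0.isSelfAdjoint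
  obtain ⟨δ, hδ, hcont⟩ := exists_norm_posPart_sub_le (x - y) ha (half_pos hε)
  obtain ⟨b, hb, hu, hab⟩ := h (x - y) (sub_mem hx hy) ha (min δ (ε / 2)) (by positivity)
  have hpos := hcont b hb (hab.trans (min_le_left _ _))
  have hab' : ‖x - y - b‖ ≤ ε / 2 := hab.trans (min_le_right _ _)
  rw [(CFC.posPart_negPart_unique rfl hxy hx0 hy0).1] at hpos
  obtain ⟨p, hp, hp1, hp0⟩ := exists_isStarProjection_mul_posPart hu
  have hpn : ‖p‖ ≤ 1 := IsStarProjection.norm_le p hp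
  refine ⟨p, isProjection_iff_isStarProjection.mpr hp, ?_, ?_⟩
  · have e : p * x - x = p * (x - b⁺) - (x - b⁺) := by rw [mul_sub, hp1]; abel
    rw [e]
    calc _ ≤ ‖p‖ * ‖x - b⁺‖ + ‖x - b⁺‖ :=
          (norm_sub_le _ _).trans (add_le_add (norm_mul_le _ _) le_rfl)
      _ ≤ 1 * (ε / 2) + ε / 2 := by gcongr
      _ = ε := by ring
  · have hbb : b⁺ - b⁻ = b := CFC.posPart_sub_negPart b hb
    have e : (1 - p) * y - y = -(p * ((x - b⁺) - (x - y - b))) := by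
      have : x - b⁺ - (x - y - b) = y - b⁻ := by nth_rw 2 [← hbb]; abel
      rw [this, mul_sub, hp0]; noncomm_ring
    rw [e, norm_neg]
    calc _ ≤ ‖p‖ * (‖x - b⁺‖ + ‖x - y - b‖) :=
          (norm_mul_le _ _).trans (by gcongr; exact norm_sub_le _ _)
      _ ≤ 1 * (ε / 2 + ε / 2) := by gcongr
      _ = ε := by ring

theorem spectrum_finite_approximation_of_separation {A : StarSubalgebra ℂ B}
    (hA : IsClosed (A : Set B))
    (h : ∀ x ∈ A, ∀ y ∈ A, 0 ≤ x → 0 ≤ y → x * y = 0 → ∀ ε : ℝ, 0 < ε →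
      ∃ p : B, IsProjection p ∧ ‖p * x - x‖ ≤ ε ∧ ‖(1 - p) * y - y‖ ≤ ε) {a : B} (ha : a ∈ A)
    (has : IsSelfAdjoint a) {ε : ℝ} (hε : 0 < ε) :
    ∃ b : B, IsSelfAdjoint b ∧ (spectrum ℂ b).Finite ∧ ‖a - b‖ ≤ ε := by
  have hε2 : (ε / 2 : ℝ) ≠ 0 := by positivity
  set M : B := algebraMap ℂ B (‖a‖ : ℂ) with hM
  have hMr : M = algebraMap ℝ B ‖a‖ := by
    rw [hM, IsScalarTower.algebraMap_apply ℝ ℂ B]; rfl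
  have hd : (ε / 2)⁻¹ • (a + M) ∈ A := by
    have e : (ε / 2)⁻¹ • (a + M) = (((ε / 2)⁻¹ : ℝ) : ℂ) • (a + M) :=
      (RCLike.real_smul_eq_coe_smul (K := ℂ) _ _)
    rw [e]
    exact A.smul_mem (add_mem ha (algebraMap_mem A _)) _
  have hd0 : 0 ≤ (ε / 2)⁻¹ • (a + M) := by
    refine smul_nonneg (by positivity) ?_
    rw [hMr]
    have := has.neg_algebraMap_norm_le_self
    exact neg_le_iff_add_nonneg.mp this
  set d := (ε / 2)⁻¹ • (a + M) with hdd
  obtain ⟨N, hN⟩ := exists_nat_ge ‖d‖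
  obtain ⟨c, hcA, hc0, hc1, hcc, hsum⟩ := exists_layers hA hd hd0 hN
  obtain ⟨P, S, hP, hS, -, hfin, -, hle, hge⟩ := exists_spectrum_finite_layers hc0 hc1
    (fun n r hr ↦ by
      obtain ⟨p, hp, h1, h2⟩ := h (c (n + 1)) (hcA _) (1 - c n) (sub_mem (one_mem _) (hcA n))
        (hc0 _) (sub_nonneg.mpr (hc1 n)) (hcc n) r hr
      refine ⟨p, isProjection_iff_isStarProjection.mp hp, h1, le_trans (le_of_eq ?_) h2⟩
      congr 1; noncomm_ring) N (1 / 3) (by norm_num)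
  rw [hsum] at hle hge
  have hdS : ‖d - S‖ ≤ 2 := by
    have h1 : d ≤ S + algebraMap ℝ B (1 + 1 / 3) := by
      rw [map_add, map_one, ← add_assoc]
      exact (le_add_of_nonneg_right hP.nonneg).trans hge
    exact (norm_sub_le_of_le_add (by norm_num) (by norm_num) hle h1).trans (by norm_num)
  refine ⟨(ε / 2) • S - M, ?_, ?_, ?_⟩
  · rw [hMr]
    exact ((IsSelfAdjoint.all _).smul hS).sub (cfc_predicate_algebraMap _)
  · rw [hM, ← spectrum.sub_singleton_eq]
    have hu : ((ε / 2 : ℝ) : ℂ) ≠ 0 := by exact_mod_cast hε2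
    have e : (ε / 2) • S = Units.mk0 _ hu • S := RCLike.real_smul_eq_coe_smul (K := ℂ) _ _
    rw [e, spectrum.unit_smul_eq_smul]
    exact (hfin.image _).sub (Set.finite_singleton _)
  · have e : a - ((ε / 2) • S - M) = (ε / 2) • (d - S) := by
      rw [smul_sub, hdd, smul_inv_smul₀ hε2]; abel
    rw [e, norm_smul, Real.norm_of_nonneg (by positivity)]
    nlinarith

end Equivalences

theorem stmt0 {B : Type*} [CStarAlgebra B] [PartialOrder B] [StarOrderedRing B]
    (A : StarSubalgebra ℂ B) (hA : IsClosed (A : Set B)) :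
    List.TFAE
      [InclusionRealRankZero (A : Set B) (Set.univ : Set B),
       ∀ a ∈ A, IsSelfAdjoint a → ∀ ε : ℝ, 0 < ε →
         ∃ b : B, IsSelfAdjoint b ∧ (spectrum ℂ b).Finite ∧ ‖a - b‖ ≤ ε,
       ∀ a ∈ A, IsSelfAdjoint a → ∀ ε : ℝ, 0 < ε →
         ∃ b : B, IsSelfAdjoint b ∧ IsUnit b ∧ ‖a - b‖ ≤ ε,
       ∀ x ∈ A, ∀ y ∈ A, 0 ≤ x → 0 ≤ y → x * y = 0 → ∀ ε : ℝ, 0 < ε →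
         ∃ p : B, IsProjection p ∧ ‖p * x - x‖ ≤ ε ∧ ‖(1 - p) * y - y‖ ≤ ε] := by
  tfae_have 1 → 4 := fun h x hx y _ hx0 _ hxy ε hε ↦
    separation_of_inclusionRealRankZero hA h hx hx0 hxy hε
  tfae_have 4 → 1 := inclusionRealRankZero_of_separation hA
  tfae_have 4 → 2 := fun h a ha has ε hε ↦
    spectrum_finite_approximation_of_separation hA h ha has hε
  tfae_have 2 → 3 := fun h a ha has ε hε ↦ by
    obtain ⟨b, hb, hfin, hab⟩ := h a ha has (ε / 2) (half_pos hε)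
    obtain ⟨c, hc, hu, hbc⟩ := invertible_approximation_of_spectrum_finite hb hfin (half_pos hε)
    exact ⟨c, hc, hu, (norm_sub_le_norm_sub_add_norm_sub a b c).trans (by linarith)⟩
  tfae_have 3 → 4 := fun h x hx y hy hx0 hy0 hxy ε hε ↦
    separation_of_invertible_approximation h hx hy hx0 hy0 hxy hε
  tfae_finish
end

section
/- Let A ⊆ B be an inclusion of C*-algebras. If there exists an intermediate C*-algebra C with A ⊆ C ⊆ B (C a closed *-subalgebra of B containing A) such that C has real rank zero, then the inclusion A ⊆ B has real rank zero. In particular, if either A or B has real rank zero, then the inclusion A ⊆ B has real rank zero. -/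
open Filter Topology

/-- A C*-subalgebra `C ⊆ B` has real rank zero (as a C*-algebra): every self-adjoint
element of `C` is a norm limit of self-adjoint elements of `C` having finite spectrum
(computed in the minimal unitization). -/
def SetRealRankZero {B : Type*} [NonUnitalCStarAlgebra B] (C : Set B) : Prop :=
  ∀ a ∈ C, IsSelfAdjoint a → ∀ ε : ℝ, 0 < ε →
    ∃ b ∈ C, IsSelfAdjoint b ∧ (spectrum ℂ (b : Unitization ℂ B)).Finite ∧ ‖a - b‖ ≤ ε

section RealRankZero

variable {B : Type*} [NonUnitalCStarAlgebra B]

lemma IsProjection.norm_le_one {p : B} (hp : IsProjection p) : ‖p‖ ≤ 1 := by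
  have h := CStarRing.norm_star_mul_self (x := p)
  rw [hp.1, hp.2] at h
  nlinarith [norm_nonneg p]

lemma quasispectrum_real_finite {b : B}
    (hfin : (spectrum ℂ (b : Unitization ℂ B)).Finite) : (quasispectrum ℝ b).Finite := by
  rw [← Unitization.quasispectrum_eq_spectrum_inr' ℂ ℂ b] at hfin
  rw [← quasispectrum.preimage_algebraMap ℂ (R := ℝ)]
  exact hfin.preimage (FaithfulSMul.algebraMap_injective ℝ ℂ).injOn

/-- A self-adjoint almost idempotent `y` is almost fixed by a projection of the form `y * g * y`. -/
lemma exists_isProjection_of_norm_mul_self_sub_le {y : B} (hy : IsSelfAdjoint y) {η : ℝ}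
    (hη : η ≤ 1 / 8) (h : ‖y * y - y‖ ≤ η) :
    ∃ g : B, IsProjection (y * g * y) ∧ ‖y * g * y * y - y‖ ≤ 2 * η := by
  let f : ℝ → ℝ := fun t ↦ max 0 (min 1 (4 * t - 1))
  let g : ℝ → ℝ := fun t ↦ f t / (max t (1 / 4)) ^ 2
  have hpos (t : ℝ) : (max t (1 / 4)) ^ 2 ≠ 0 := by
    have : 0 < max t (1 / 4) := lt_max_of_lt_right (by norm_num)
    positivity
  have hfc : Continuous f := by fun_prop
  have hgc : Continuous g := hfc.div (by fun_prop) hpos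
  have hf0 : f 0 = 0 := by norm_num [f]
  have hg0 : g 0 = 0 := by simp [g, hf0]
  have hf_low {t : ℝ} (ht : t ≤ 1 / 4) : f t = 0 :=
    max_eq_left ((min_le_right _ _).trans (by linarith))
  have hf_high {t : ℝ} (ht : 1 / 2 ≤ t) : f t = 1 := by
    simp only [f]
    rw [min_eq_left (by linarith), max_eq_right zero_le_one]
  have hspec (t : ℝ) (ht : t ∈ quasispectrum ℝ y) : |t * t - t| ≤ η := by
    have e : cfcₙ (fun t : ℝ ↦ t * t - t) y = y * y - y := by
      rw [cfcₙ_sub _ _ y, cfcₙ_mul _ _ y, cfcₙ_id' ℝ y]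
    have := norm_apply_le_norm_cfcₙ (fun t : ℝ ↦ t * t - t) y ht
    rw [e] at this
    exact this.trans h
  have hgap (t : ℝ) (ht : t ∈ quasispectrum ℝ y) : t ≤ 1 / 4 ∨ 1 / 2 ≤ t := by
    by_contra! hcon
    have := abs_le.mp (hspec t ht)
    nlinarith
  have hfg (t : ℝ) : f t = t * g t * t := by
    rcases le_total t (1 / 4) with ht | ht
    · simp [g, hf_low ht]
    · have : t ≠ 0 := by linarith
      simp only [g, max_eq_left ht]
      field_simp
  clear_value g f
  have hp : y * cfcₙ g y * y = cfcₙ f y := by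
    rw [funext hfg, cfcₙ_mul (fun t ↦ t * g t) (fun t ↦ t) y (by fun_prop) (by simp),
      cfcₙ_mul (fun t ↦ t) g y continuousOn_id rfl hgc.continuousOn hg0, cfcₙ_id' ℝ y]
  refine ⟨cfcₙ g y, ?_, ?_⟩
  · rw [hp]
    refine ⟨(cfcₙ_predicate f y : IsSelfAdjoint _), ?_⟩
    rw [← cfcₙ_mul f f y hfc.continuousOn hf0 hfc.continuousOn hf0]
    refine cfcₙ_congr fun t ht ↦ ?_
    rcases hgap t ht with h' | h'
    · simp [hf_low h']
    · simp [hf_high h']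
  · have e : cfcₙ (fun t ↦ f t * t - t) y = y * cfcₙ g y * y * y - y := by
      rw [hp, cfcₙ_sub (fun t ↦ f t * t) (fun t ↦ t) y (by fun_prop) (by simp),
        cfcₙ_mul f (fun t ↦ t) y hfc.continuousOn hf0, cfcₙ_id' ℝ y]
    have hη0 : 0 ≤ η := (norm_nonneg _).trans h
    rw [← e]
    refine norm_cfcₙ_le fun t ht ↦ ?_
    rcases hgap t ht with h' | h'
    · have h1 := hspec t ht
      have h2 : t * t - t = t * (t - 1) := by ring
      rw [h2, abs_mul] at h1
      have h3 : 1 / 2 ≤ |t - 1| := by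
        rw [abs_of_nonpos (by linarith)]
        linarith
      simp only [hf_low h', zero_mul, zero_sub, norm_neg, Real.norm_eq_abs]
      nlinarith [abs_nonneg t]
    · simp only [hf_high h', one_mul, sub_self, norm_zero]
      linarith

/-- A self-adjoint element with finite spectrum has a spectral projection `b * k * b` cutting off
the part of the spectrum in `(-δ, δ)`. -/
lemma exists_isProjection_of_finite_spectrum {b : B} (hb : IsSelfAdjoint b)
    (hfin : (spectrum ℂ (b : Unitization ℂ B)).Finite) {δ : ℝ} (hδ : 0 < δ) :
    ∃ k : B, IsSelfAdjoint k ∧ ‖k‖ ≤ (δ ^ 2)⁻¹ ∧ IsProjection (b * k * b) ∧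
      ‖b - b * k * b * b‖ ≤ δ := by
  have hc (f : ℝ → ℝ) : ContinuousOn f (quasispectrum ℝ b) :=
    (quasispectrum_real_finite hfin).continuousOn f
  let f : ℝ → ℝ := fun t ↦ if δ ≤ |t| then 1 else 0
  let g : ℝ → ℝ := fun t ↦ if δ ≤ |t| then (t ^ 2)⁻¹ else 0
  have hf0 : f 0 = 0 := by simp [f, hδ]
  have hg0 : g 0 = 0 := by simp [g]
  have hp : b * cfcₙ g b * b = cfcₙ f b := by
    have e : f = fun t ↦ t * g t * t := by
      funext t
      by_cases ht : δ ≤ |t|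
      · have : t ≠ 0 := abs_pos.mp (hδ.trans_le ht)
        simp only [f, g, ht, if_true]
        field_simp
      · simp [f, g, ht]
    rw [e, cfcₙ_mul _ _ b (hc _) (by simp) (hc _), cfcₙ_mul _ _ b (hc _) rfl (hc _),
      cfcₙ_id' ℝ b]
  refine ⟨cfcₙ g b, (cfcₙ_predicate g b : IsSelfAdjoint _), ?_, ?_, ?_⟩
  · refine norm_cfcₙ_le fun t _ ↦ ?_
    by_cases ht : δ ≤ |t|
    · simp only [g, ht, if_true, norm_inv, norm_pow, Real.norm_eq_abs]
      gcongr
    · simp only [g, ht, if_false, norm_zero]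
      positivity
  · rw [hp]
    refine ⟨(cfcₙ_predicate f b : IsSelfAdjoint _), ?_⟩
    rw [← cfcₙ_mul f f b (hc _) hf0 (hc _) hf0]
    refine cfcₙ_congr fun t _ ↦ ?_
    by_cases ht : δ ≤ |t| <;> simp [f, ht]
  · have e : cfcₙ (fun t ↦ t - f t * t) b = b - b * cfcₙ g b * b * b := by
      rw [hp, cfcₙ_sub _ _ b (hc _) rfl (hc _) (by simp), cfcₙ_mul _ _ b (hc _) hf0 (hc _),
        cfcₙ_id' ℝ b]
    rw [← e]
    refine norm_cfcₙ_le fun t _ ↦ ?_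
    by_cases ht : δ ≤ |t|
    · simp [f, ht, hδ.le]
    · simpa [f, ht] using (not_le.mp ht).le

lemma norm_mul_sub_le_of_isProjection {p : B} (hp : IsProjection p) (x : B) :
    ‖p * x - x‖ ≤ 2 * ‖x‖ := by
  have h1 := norm_sub_le (p * x) x
  have h2 := norm_mul_le p x
  have h3 := mul_le_mul_of_nonneg_right hp.norm_le_one (norm_nonneg x)
  linarith

lemma exists_isProjection_norm_mul_sub_lt {a : B} (ha : IsSelfAdjoint a)
    (h : ∀ ε : ℝ, 0 < ε → ∃ b : B, IsSelfAdjoint b ∧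
      (spectrum ℂ (b : Unitization ℂ B)).Finite ∧ ‖a - b‖ ≤ ε) {ε : ℝ} (hε : 0 < ε) :
    ∃ c : B, IsProjection (a * c * a) ∧ ‖a * c * a * a - a‖ < ε := by
  obtain ⟨M, hM⟩ : ∃ M, M = ‖a‖ + 1 := ⟨_, rfl⟩
  obtain ⟨δ, hδ⟩ : ∃ δ, δ = ε / 8 := ⟨_, rfl⟩
  obtain ⟨K, hK⟩ : ∃ K, K = (δ ^ 2)⁻¹ * (2 * M) := ⟨_, rfl⟩
  have hM0 : 0 < M := by have := norm_nonneg a; linarith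
  have hδ0 : 0 < δ := by linarith
  have hK0 : 0 < K := by rw [hK]; positivity
  obtain ⟨η, hη0, hη1, hη2, hη3⟩ :
      ∃ η : ℝ, 0 < η ∧ η ≤ 1 ∧ K * η ≤ 1 / 32 ∧ (2 + 10 * K * M) * η ≤ ε / 2 := by
    refine ⟨min 1 (min (1 / 32 / K) (ε / 2 / (2 + 10 * K * M))), by positivity,
      min_le_left _ _, ?_, ?_⟩
    · rw [mul_comm, ← le_div_iff₀ hK0]
      exact (min_le_right _ _).trans (min_le_left _ _)
    · rw [mul_comm, ← le_div_iff₀ (by positivity)]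
      exact (min_le_right _ _).trans (min_le_right _ _)
  obtain ⟨b, hb, hfin, hab⟩ := h η hη0
  obtain ⟨k, hk, hkn, hq, hbq⟩ := exists_isProjection_of_finite_spectrum hb hfin hδ0
  obtain ⟨q, hqe⟩ : ∃ q, q = b * k * b := ⟨_, rfl⟩
  obtain ⟨y, hye⟩ : ∃ y, y = a * k * a := ⟨_, rfl⟩
  rw [← hqe] at hq hbq
  have hbn : ‖b‖ ≤ M := by
    have := norm_sub_norm_le b a
    rw [norm_sub_rev] at this
    linarith
  have hy : IsSelfAdjoint y := by
    rw [hye, IsSelfAdjoint, star_mul, star_mul, ha.star_eq, hk.star_eq, mul_assoc]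
  have he : ‖y - q‖ ≤ K * η := by
    have e : y - q = a * k * (a - b) + (a - b) * k * b := by rw [hye, hqe]; noncomm_ring
    have h1 : ‖a * k * (a - b)‖ ≤ M * (δ ^ 2)⁻¹ * η :=
      (norm_mul₃_le).trans (by gcongr; linarith)
    have h2 : ‖(a - b) * k * b‖ ≤ η * (δ ^ 2)⁻¹ * M :=
      (norm_mul₃_le).trans (by gcongr)
    rw [e, hK]
    exact (norm_add_le _ _).trans (by linarith)
  have hyy : ‖y * y - y‖ ≤ 4 * (K * η) := by
    have e : y * y - y = (y - q) * (y - q) + (y - q) * q + (q * (y - q) - (y - q)) := by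
      have e1 : (y - q) * (y - q) + (y - q) * q + (q * (y - q) - (y - q))
        = y * y - y + (q - q * q) := by noncomm_ring
      rw [e1, hq.2, sub_self, add_zero]
    have h1 := norm_mul_le (y - q) (y - q)
    have h2 := norm_mul_le (y - q) q
    have h3 := norm_mul_sub_le_of_isProjection hq (y - q)
    have h4 := norm_add₃_le (a := (y - q) * (y - q)) (b := (y - q) * q)
      (c := q * (y - q) - (y - q))
    rw [← e] at h4
    have h5 := hq.norm_le_one
    nlinarith [norm_nonneg (y - q)]
  obtain ⟨g, hp, hpy⟩ := exists_isProjection_of_norm_mul_self_sub_le hy (by linarith) hyy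
  have hpe : y * g * y = a * (k * a * g * a * k) * a := by rw [hye]; noncomm_ring
  refine ⟨k * a * g * a * k, hpe ▸ hp, ?_⟩
  rw [← hpe]
  obtain ⟨p, hpe'⟩ : ∃ p, p = y * g * y := ⟨_, rfl⟩
  rw [← hpe'] at hp hpy ⊢
  have e : p * a - a = (p * (a - b + (b - q * b)) - (a - b + (b - q * b)))
      - (p * ((y - q) * b) - (y - q) * b) + (p * y - y) * b := by noncomm_ring
  have h1 := norm_mul_sub_le_of_isProjection hp (a - b + (b - q * b))
  have h2 := norm_mul_sub_le_of_isProjection hp ((y - q) * b)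
  have h3 : ‖(y - q) * b‖ ≤ K * η * M := (norm_mul_le _ _).trans (by gcongr)
  have h4 : ‖(p * y - y) * b‖ ≤ 2 * (4 * (K * η)) * M := (norm_mul_le _ _).trans (by gcongr)
  have h5 := norm_add_le (a - b) (b - q * b)
  rw [e]
  refine (norm_add_le _ _).trans_lt ?_
  have h6 := norm_sub_le (p * (a - b + (b - q * b)) - (a - b + (b - q * b)))
    (p * ((y - q) * b) - (y - q) * b)
  nlinarith

lemma hasApproxUnitOfProjections_herSub [PartialOrder B] {a : B}
    (h : ∀ ε : ℝ, 0 < ε → ∃ c : B, IsProjection (a * c * a) ∧ ‖a * c * a * a - a‖ < ε) :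
    HasApproxUnitOfProjections (herSub Set.univ a) := by
  intro x hx _ ε hε
  obtain ⟨_, ⟨d, -, rfl⟩, hd⟩ := Metric.mem_closure_iff.mp hx (ε / 4) (by positivity)
  rw [dist_eq_norm] at hd
  obtain ⟨c, hp, hc⟩ := h (ε / 2 / (‖d * a‖ + 1)) (by positivity)
  refine ⟨a * c * a, subset_closure ⟨c, trivial, rfl⟩, hp, ?_⟩
  have e : a * c * a * x - x = (a * c * a * (x - a * d * a) - (x - a * d * a))
      + (a * c * a * a - a) * (d * a) := by noncomm_ring
  have h1 := norm_mul_sub_le_of_isProjection hp (x - a * d * a)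
  have h2 : ‖(a * c * a * a - a) * (d * a)‖ ≤ ε / 2 := by
    refine (norm_mul_le _ _).trans ?_
    have h3 := (lt_div_iff₀ (by positivity)).mp hc
    nlinarith [norm_nonneg (a * c * a * a - a)]
  rw [e]
  exact (norm_add_le _ _).trans_lt (by linarith)

lemma SetRealRankZero.inclusionRealRankZero [PartialOrder B] [StarOrderedRing B] {A C : Set B}
    (hC : SetRealRankZero C) (hAC : A ⊆ C) : InclusionRealRankZero A Set.univ := by
  intro a ha ha0 _
  have hsa : IsSelfAdjoint a := .of_nonneg ha0
  refine hasApproxUnitOfProjections_herSub fun ε hε ↦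
    exists_isProjection_norm_mul_sub_lt hsa (fun ε hε ↦ ?_) hε
  obtain ⟨b, -, hb⟩ := hC a (hAC ha) hsa ε hε
  exact ⟨b, hb⟩

end RealRankZero

theorem stmt6 {B : Type*} [NonUnitalCStarAlgebra B] [PartialOrder B] [StarOrderedRing B]
    (A : NonUnitalStarSubalgebra ℂ B) (hA : IsClosed (A : Set B)) :
    ((∃ C : NonUnitalStarSubalgebra ℂ B, IsClosed (C : Set B) ∧ (A : Set B) ⊆ (C : Set B) ∧
        SetRealRankZero (C : Set B)) →
      InclusionRealRankZero (A : Set B) (Set.univ : Set B)) ∧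
    (SetRealRankZero (A : Set B) →
      InclusionRealRankZero (A : Set B) (Set.univ : Set B)) ∧
    (SetRealRankZero (Set.univ : Set B) →
      InclusionRealRankZero (A : Set B) (Set.univ : Set B)) := by
  refine ⟨?_, fun h ↦ h.inclusionRealRankZero subset_rfl,
    fun h ↦ h.inclusionRealRankZero (Set.subset_univ _)⟩
  rintro ⟨C, -, hAC, hC⟩
  exact hC.inclusionRealRankZero hAC
end
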